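/- For every prime p with p ≡ 3 (mod 4), C_u(p) = 2·C_sd(p) and C_sd(p) = C_t(p); that is, the number of undirected circulant graphs of order p equals twice the number of self-complementary directed circulant graphs of order p, which in turn equals the number of circulant tournaments of order p. -/

import Mathlib

open Finset

/-- Number of self-complementary directed circulant graphs of odd prime order `p`:
`C_sd(p) = (1/(p-1))·∑_{r | p-1, r even} φ(r)·2^{(p-1)/r}`. -/
def Csd (p : ℕ) : ℚ :=
  (1 / ((p : ℚ) - 1)) *
    ∑ r ∈ (p - 1).divisors.filter (fun r => Even r),
      (Nat.totient r : ℚ) * (2 : ℚ) ^ ((p - 1) / r)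

/-- Number of circulant tournaments of odd prime order `p`:
`C_t(p) = (1/(p-1))·∑_{r | p-1, r odd} φ(r)·2^{(p-1)/(2r)}`. -/
def Ct (p : ℕ) : ℚ :=
  (1 / ((p : ℚ) - 1)) *
    ∑ r ∈ (p - 1).divisors.filter (fun r => Odd r),
      (Nat.totient r : ℚ) * (2 : ℚ) ^ ((p - 1) / (2 * r))

/-- Number of undirected circulant graphs of odd prime order `p`:
`C_u(p) = (2/(p-1))·∑_{r | (p-1)/2} φ(r)·2^{(p-1)/(2r)}`. -/
def Cu (p : ℕ) : ℚ :=
  (2 / ((p : ℚ) - 1)) *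
    ∑ r ∈ ((p - 1) / 2).divisors,
      (Nat.totient r : ℚ) * (2 : ℚ) ^ ((p - 1) / (2 * r))

/-!
If `p ≡ 3 (mod 4)`, then `p - 1 = 2 * m` with `m` odd. The odd divisors of `2 * m` are the divisors
`r` of `m` and the even ones are their doubles `2 * r`, for which `φ (2 * r) = φ r`. So the three
formulas are sums of the same terms `φ r * 2 ^ (m / r)` over the divisors `r` of `m`, with prefactor
`2 / (p - 1)` for undirected graphs and `1 / (p - 1)` in the two other cases.
-/

theorem filter_coprime_divisors_mul {k m : ℕ} (hk : k ≠ 0) (hkm : k.Coprime m) :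
    (k * m).divisors.filter (fun d => k.Coprime d) = m.divisors := by
  ext d
  simp only [mem_filter, Nat.mem_divisors, mul_ne_zero_iff]
  constructor
  · rintro ⟨⟨hd, -, hm⟩, hkd⟩
    exact ⟨hkd.symm.dvd_of_dvd_mul_left hd, hm⟩
  · rintro ⟨hd, hm⟩
    exact ⟨⟨hd.mul_left k, hk, hm⟩, hkm.coprime_dvd_right hd⟩

theorem filter_dvd_divisors_mul {k : ℕ} (hk : k ≠ 0) (m : ℕ) :
    (k * m).divisors.filter (fun d => k ∣ d) = m.divisors.image (fun d => k * d) := by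
  ext d
  simp only [mem_filter, mem_image, Nat.mem_divisors, mul_ne_zero_iff]
  constructor
  · rintro ⟨⟨hd, -, hm⟩, e, rfl⟩
    exact ⟨e, ⟨Nat.dvd_of_mul_dvd_mul_left (Nat.pos_of_ne_zero hk) hd, hm⟩, rfl⟩
  · rintro ⟨e, ⟨he, hm⟩, rfl⟩
    exact ⟨⟨Nat.mul_dvd_mul_left k he, hk, hm⟩, dvd_mul_right k e⟩

theorem sum_totient_mul_filter_dvd_divisors_mul {R : Type*} [Semiring R] {k m : ℕ}
    (hk : k ≠ 0) (hkm : k.Coprime m) (f : ℕ → R) :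
    ∑ d ∈ (k * m).divisors.filter (fun d => k ∣ d), (Nat.totient d : R) * f d =
      (Nat.totient k : R) * ∑ d ∈ m.divisors, (Nat.totient d : R) * f (k * d) := by
  rw [filter_dvd_divisors_mul hk, sum_image (mul_right_injective₀ hk).injOn, mul_sum]
  refine sum_congr rfl fun d hd => ?_
  have hkd : k.Coprime d := hkm.coprime_dvd_right (Nat.dvd_of_mem_divisors hd)
  rw [Nat.totient_mul hkd, Nat.cast_mul, mul_assoc]

theorem exists_odd_pred_eq_two_mul {n : ℕ} (hn : n % 4 = 3) :
    ∃ m, Odd m ∧ n - 1 = 2 * m :=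
  ⟨(n - 1) / 2, Nat.odd_iff.mpr (by omega), by omega⟩

theorem two_mul_Csd_eq_Cu {n : ℕ} (hn : n % 4 = 3) : 2 * Csd n = Cu n := by
  obtain ⟨m, hm, hnm⟩ := exists_odd_pred_eq_two_mul hn
  have heven := sum_totient_mul_filter_dvd_divisors_mul two_ne_zero
    (Nat.coprime_two_left.mpr hm) fun r => (2 : ℚ) ^ (2 * m / r)
  rw [Nat.totient_two, Nat.cast_one, one_mul] at heven
  simp only [Csd, Cu, hnm, Nat.mul_div_cancel_left m two_pos, even_iff_two_dvd, heven]
  ring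

theorem two_mul_Ct_eq_Cu {n : ℕ} (hn : n % 4 = 3) : 2 * Ct n = Cu n := by
  obtain ⟨m, hm, hnm⟩ := exists_odd_pred_eq_two_mul hn
  have hodd := filter_coprime_divisors_mul two_ne_zero (Nat.coprime_two_left.mpr hm)
  simp only [Nat.coprime_two_left] at hodd
  simp only [Ct, Cu, hnm, Nat.mul_div_cancel_left m two_pos, hodd]
  ring

theorem Cu_eq_two_mul_Csd_and_Csd_eq_Ct_general (n : ℕ) (hn : n % 4 = 3) :
    Cu n = 2 * Csd n ∧ Csd n = Ct n :=
  ⟨(two_mul_Csd_eq_Cu hn).symm,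
    mul_left_cancel₀ two_ne_zero ((two_mul_Csd_eq_Cu hn).trans (two_mul_Ct_eq_Cu hn).symm)⟩

/-- For every prime `p ≡ 3 (mod 4)`, `C_u(p) = 2·C_sd(p)` and `C_sd(p) = C_t(p)`. -/
theorem Cu_eq_two_mul_Csd_and_Csd_eq_Ct (p : ℕ) (hp : p.Prime)
    (hmod : p % 4 = 3) :
    Cu p = 2 * Csd p ∧ Csd p = Ct p :=
  Cu_eq_two_mul_Csd_and_Csd_eq_Ct_general p hmod
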